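/- Let (W, S) be a Coxeter system with S finite, |S| = f, such that for all distinct s, t ∈ S the order m(s,t) of s·t is either 2 or ∞ (i.e., (W,S) is right-angled). Let e2 be the number of two-element subsets {s,t} ⊆ S with m(s,t) = 2, and let v222 be the number of three-element subsets T ⊆ S whose standard parabolic subgroup W_T is finite. Assume that for every four-element subset T ⊆ S the standard parabolic subgroup W_T is infinite. Let f_S(t) = ∑_{k≥0} a_k t^k ∈ ℤ[[t]] be the growth series of (W, S), where a_k is the number of elements w ∈ W whose word length with respect to S equals k. Then in the ring of formal power series ℤ[[t]] one has f_S(t) · ((1+t)³ − f·t·(1+t)² + e2·t²·(1+t) − v222·t³) = (1+t)³. -/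

import Mathlib

open PowerSeries

/-!
For a set `T` of simple reflections let `D_T` be the generating function, by length, of the elements
having every `s ∈ T` as a right descent. Only the identity has no right descent, so
inclusion-exclusion gives `∑_T (-1)^|T| D_T = 1`.

If `s` commutes with all of `T`, right multiplication by `s` matches the elements counted by
`D_{T ∪ {s}}` with the elements counted by `D_T` that do not have the descent `s`, whence
`(1 + t) D_{T ∪ {s}} = t D_T` and `D_T = (t / (1 + t))^|T| f_S` for every spherical `T`. If two
simple reflections generate an infinite dihedral group, no element has both as right descents, since
it could be shortened forever by an alternating word; so `D_T = 0` for every other `T`. Clearing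
denominators in the alternating sum gives the formula.

Both facts about descents follow from the action of `W` on `W × ℤ/2` which shows that the parity of
the multiplicity of a reflection in the inversion sequence of a word depends only on the word's
product.
-/

namespace CoxeterGrowth

variable {B W : Type*} [Group W] {M : CoxeterMatrix B} (cs : CoxeterSystem M W)

section Inversions

open CoxeterSystem (alternatingWord)

theorem prod_map_alternatingWord_two_mul {G : Type*} [Monoid G] (φ : B → G) (i j : B) (n : ℕ) :
    ((alternatingWord i j (2 * n)).map φ).prod = (φ i * φ j) ^ n := by
  induction n with
  | zero => simp [alternatingWord]
  | succ n ih =>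
    rw [mul_add_one, CoxeterSystem.alternatingWord_succ, CoxeterSystem.alternatingWord_succ]
    simp [ih, pow_succ]

theorem rightInvSeq_alternatingWord (i j : B) (n : ℕ) :
    cs.rightInvSeq (alternatingWord i j n) =
      ((List.range n).map fun k => (cs.simple j * cs.simple i) ^ k * cs.simple j).reverse := by
  induction n generalizing i j with
  | zero => simp [alternatingWord]
  | succ n ih =>
    have conj_eq (k : ℕ) : cs.simple j * ((cs.simple i * cs.simple j) ^ k * cs.simple i) *
        cs.simple j = (cs.simple j * cs.simple i) ^ (k + 1) * cs.simple j := by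
      have semiconj : SemiconjBy (cs.simple i) (cs.simple j * cs.simple i)
          (cs.simple i * cs.simple j) := (mul_assoc _ _ _).symm
      rw [← (semiconj.pow_right k).eq, pow_succ', ← mul_assoc]
    rw [CoxeterSystem.alternatingWord_succ, cs.rightInvSeq_concat, ih, List.range_succ_eq_map]
    simp [List.map_reverse, Function.comp_def, conj_eq]

open Classical in
/-- Bourbaki's permutation of `W × ℤ/2` attached to a simple reflection `s`: it conjugates the
first coordinate by `s` and flips the second one exactly at `s`. -/
noncomputable def signedConj (i : B) : Equiv.Perm (W × ZMod 2) :=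
  Equiv.prodShear (MulAut.conj (cs.simple i)).toEquiv fun t =>
    Equiv.addRight (if t = cs.simple i then 1 else 0)

theorem prod_map_signedConj_apply [DecidableEq W] (ω : List B) (t : W) (ε : ZMod 2) :
    (ω.map (signedConj cs)).prod (t, ε) =
      (cs.wordProd ω * t * (cs.wordProd ω)⁻¹, ε + (cs.rightInvSeq ω).count t) := by
  induction ω with
  | nil => simp
  | cons i ω ih =>
    have conj_eq_iff : cs.wordProd ω * t * (cs.wordProd ω)⁻¹ = cs.simple i ↔
        (cs.wordProd ω)⁻¹ * cs.simple i * cs.wordProd ω = t := by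
      rw [mul_inv_eq_iff_eq_mul, ← eq_inv_mul_iff_mul_eq, mul_assoc, eq_comm]
    rw [List.map_cons, List.prod_cons, Equiv.Perm.mul_apply, ih]
    ext
    · simp [signedConj, cs.wordProd_cons, mul_assoc]
    · simp [signedConj, CoxeterSystem.rightInvSeq, List.count_cons, conj_eq_iff, add_assoc]

-- The right inversion sequence of `(i j)^m`, with `m = M i j`, runs twice through the same `m`
-- reflections.
theorem even_count_rightInvSeq_alternatingWord [DecidableEq W] (i j : B) (t : W) :
    Even ((cs.rightInvSeq (alternatingWord i j (2 * M i j))).count t) := by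
  have periodic (k : ℕ) : (cs.simple j * cs.simple i) ^ (M i j + k) =
      (cs.simple j * cs.simple i) ^ k := by
    rw [pow_add, M.symmetric, cs.simple_mul_simple_pow, one_mul]
  rw [rightInvSeq_alternatingWord, List.count_reverse, two_mul, List.range_add, List.map_append,
    List.count_append, List.map_map]
  simp only [Function.comp_def, periodic, Even.add_self]

theorem isLiftable_signedConj : M.IsLiftable (signedConj cs) := by
  classical
  intro i j
  have wordProd_eq : cs.wordProd (alternatingWord i j (2 * M i j)) = 1 :=
    (prod_map_alternatingWord_two_mul cs.simple i j _).trans (cs.simple_mul_simple_pow i j)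
  rw [← prod_map_alternatingWord_two_mul]
  ext1 ⟨t, ε⟩
  rw [prod_map_signedConj_apply, wordProd_eq,
    (ZMod.natCast_eq_zero_iff_even).2 (even_count_rightInvSeq_alternatingWord cs i j t)]
  simp

/-- The parity of the number of times `t` occurs in the right inversion sequence of a word for
`w`; it is independent of the word, being read off an action of `W` on `W × ℤ/2`. -/
noncomputable def inversionParity (w t : W) : ZMod 2 :=
  (cs.lift ⟨signedConj cs, isLiftable_signedConj cs⟩ w (t, 0)).2

theorem lift_signedConj_wordProd (ω : List B) :
    cs.lift ⟨signedConj cs, isLiftable_signedConj cs⟩ (cs.wordProd ω) =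
      (ω.map (signedConj cs)).prod := by
  simp only [CoxeterSystem.wordProd, map_list_prod, List.map_map, Function.comp_def,
    cs.lift_apply_simple]

theorem inversionParity_wordProd [DecidableEq W] (ω : List B) (t : W) :
    inversionParity cs (cs.wordProd ω) t = (cs.rightInvSeq ω).count t := by
  rw [inversionParity, lift_signedConj_wordProd, prod_map_signedConj_apply, zero_add]

theorem inversionParity_mul (w u t : W) :
    inversionParity cs (w * u) t =
      inversionParity cs u t + inversionParity cs w (u * t * u⁻¹) := by
  classical
  obtain ⟨ω, rfl⟩ := cs.wordProd_surjective w
  obtain ⟨υ, rfl⟩ := cs.wordProd_surjective u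
  rw [inversionParity, map_mul, Equiv.Perm.mul_apply]
  simp only [lift_signedConj_wordProd, prod_map_signedConj_apply, inversionParity_wordProd,
    zero_add]

theorem inversionParity_simple [DecidableEq W] (i : B) (t : W) :
    inversionParity cs (cs.simple i) t = if t = cs.simple i then 1 else 0 := by
  rw [← cs.wordProd_singleton, inversionParity_wordProd]
  simp [List.count_singleton, @eq_comm _ t]

theorem inversionParity_self {t : W} (ht : cs.IsReflection t) : inversionParity cs t t = 1 := by
  classical
  obtain ⟨w, i, rfl⟩ := ht
  set t := w * cs.simple i * w⁻¹ with t_def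
  have conj_eq : w⁻¹ * t * w⁻¹⁻¹ = cs.simple i := by rw [t_def]; group
  have parity_one : inversionParity cs w⁻¹ t + inversionParity cs w (cs.simple i) = 0 := by
    rw [← conj_eq, ← inversionParity_mul, mul_inv_cancel, ← cs.wordProd_nil,
      inversionParity_wordProd]
    simp
  calc inversionParity cs t t
    _ = inversionParity cs w⁻¹ t +
        (inversionParity cs (cs.simple i) (cs.simple i) +
          inversionParity cs w (cs.simple i)) := by
      conv_lhs => rw [t_def]
      rw [inversionParity_mul, ← t_def, conj_eq, inversionParity_mul, mul_inv_cancel_right]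
    _ = 1 := by
      rw [add_left_comm, parity_one, inversionParity_simple, if_pos rfl, add_zero]

theorem isRightInversion_of_inversionParity_eq_one {w t : W} (h : inversionParity cs w t = 1) :
    cs.IsRightInversion w t := by
  classical
  obtain ⟨ω, hω, rfl⟩ := cs.exists_isReduced w
  refine cs.isRightInversion_of_mem_rightInvSeq hω (by_contra fun ht => ?_)
  rw [inversionParity_wordProd, List.count_eq_zero_of_not_mem ht] at h
  exact absurd h (by decide)

theorem isRightInversion_iff_inversionParity_eq_one {w t : W} :
    cs.IsRightInversion w t ↔ inversionParity cs w t = 1 := by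
  refine ⟨fun h => by_contra fun hne => ?_, isRightInversion_of_inversionParity_eq_one cs⟩
  have parity_zero : inversionParity cs w t = 0 :=
    not_imp_comm.1 (Fin.eq_one_of_ne_zero _) hne
  refine h.1.isRightInversion_mul_left_iff.1
    (isRightInversion_of_inversionParity_eq_one cs ?_) h
  rw [inversionParity_mul, mul_inv_cancel_right, inversionParity_self cs h.1, parity_zero,
    add_zero]

theorem isRightDescent_iff_inversionParity_eq_one {w : W} {i : B} :
    cs.IsRightDescent w i ↔ inversionParity cs w (cs.simple i) = 1 := by
  rw [← cs.isRightInversion_simple_iff_isRightDescent, isRightInversion_iff_inversionParity_eq_one]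

end Inversions

section Descents

open CoxeterSystem (alternatingWord)

theorem inversionParity_alternatingWord_simple {i j : B}
    (h : ¬ IsOfFinOrder (cs.simple j * cs.simple i)) (n : ℕ) :
    inversionParity cs (cs.wordProd (alternatingWord i j n)) (cs.simple i) = 0 := by
  classical
  rw [inversionParity_wordProd, List.count_eq_zero_of_not_mem, Nat.cast_zero]
  simp only [rightInvSeq_alternatingWord, List.mem_reverse, List.mem_map, not_exists, not_and]
  intro k _ hk
  refine h (isOfFinOrder_iff_pow_eq_one.2 ⟨k + 1, k.succ_pos, ?_⟩)
  rw [pow_succ, ← mul_assoc, hk, cs.simple_mul_simple_self]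

-- If `s` is an inversion of `u a` but not of `a`, then `a s a⁻¹` is an inversion of `u`. With `a`
-- alternating in `i`, `j` and `u a = w`, each letter added to `a` therefore shortens `u`.
theorem length_mul_inv_alternatingWord_add_le {w : W} {i j : B} (hi : cs.IsRightDescent w i)
    (hj : cs.IsRightDescent w j) (h : ¬ IsOfFinOrder (cs.simple i * cs.simple j)) (n : ℕ) :
    cs.length (w * (cs.wordProd (alternatingWord i j n))⁻¹) + n ≤ cs.length w := by
  induction n generalizing i j with
  | zero => simp [alternatingWord]
  | succ n ih =>
    have h_swap : ¬ IsOfFinOrder (cs.simple j * cs.simple i) := by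
      rwa [← isOfFinOrder_inv_iff, mul_inv_rev, cs.inv_simple, cs.inv_simple]
    set a := cs.wordProd (alternatingWord j i n) with a_def
    have inversion : cs.IsRightInversion (w * a⁻¹) (a * cs.simple j * a⁻¹) := by
      rw [isRightInversion_iff_inversionParity_eq_one]
      have parity_w := (isRightDescent_iff_inversionParity_eq_one cs).1 hj
      rwa [← inv_mul_cancel_right w a, inversionParity_mul,
        inversionParity_alternatingWord_simple cs h, zero_add] at parity_w
    have next_eq : w * a⁻¹ * (a * cs.simple j * a⁻¹) =
        w * (cs.wordProd (alternatingWord i j (n + 1)))⁻¹ := by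
      rw [CoxeterSystem.alternatingWord_succ, cs.wordProd_concat, ← a_def, mul_inv_rev,
        cs.inv_simple]
      group
    have length_lt := inversion.2
    rw [next_eq] at length_lt
    have length_le := ih hj hi h_swap
    rw [← a_def] at length_le
    omega

theorem isOfFinOrder_simple_mul_simple_of_isRightDescent {w : W} {i j : B}
    (hi : cs.IsRightDescent w i) (hj : cs.IsRightDescent w j) :
    IsOfFinOrder (cs.simple i * cs.simple j) := by
  by_contra h
  have := length_mul_inv_alternatingWord_add_le cs hi hj h (cs.length w + 1)
  omega

theorem commute_simple_of_pow_two_eq_one {i j : B} (h : (cs.simple i * cs.simple j) ^ 2 = 1) :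
    Commute (cs.simple i) (cs.simple j) := by
  rw [pow_two, mul_eq_one_iff_eq_inv] at h
  rwa [mul_inv_rev, cs.inv_simple, cs.inv_simple] at h

theorem isRightDescent_mul_simple_iff_of_orderOf_eq_two {i j : B}
    (h : orderOf (cs.simple i * cs.simple j) = 2) (w : W) :
    cs.IsRightDescent (w * cs.simple j) i ↔ cs.IsRightDescent w i := by
  classical
  have simple_ne : cs.simple i ≠ cs.simple j := by
    intro heq
    rw [heq, cs.simple_mul_simple_self, orderOf_one] at h
    exact absurd h (by decide)
  have hcomm : Commute (cs.simple i) (cs.simple j) :=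
    commute_simple_of_pow_two_eq_one cs (h ▸ pow_orderOf_eq_one _)
  rw [isRightDescent_iff_inversionParity_eq_one, isRightDescent_iff_inversionParity_eq_one,
    inversionParity_mul, inversionParity_simple, if_neg simple_ne, zero_add, ← hcomm.eq,
    mul_inv_cancel_right]

end Descents

section RightAngled

/-- Distinct generators of a right-angled Coxeter system commute or satisfy no relation; Mathlib
encodes `m(s, t) = ∞` as `M i j = 0`. -/
def IsRightAngled (M : CoxeterMatrix B) : Prop :=
  ∀ i j : B, i ≠ j → M i j = 2 ∨ M i j = 0

theorem IsRightAngled.isLiftable (hM : IsRightAngled M) {G : Type*} [Monoid G] {φ : B → G}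
    (hsq : ∀ i, φ i * φ i = 1) (hcomm : ∀ i j, M i j = 2 → Commute (φ i) (φ j)) :
    M.IsLiftable φ := by
  intro i j
  rcases eq_or_ne i j with rfl | hij
  · rw [hsq, one_pow]
  · rcases hM i j hij with h | h
    · rw [h, (hcomm i j h).mul_pow, pow_two, pow_two, hsq, hsq, one_mul]
    · rw [h, pow_zero]

theorem exists_hom_dihedralGroup (hM : IsRightAngled M) {i j : B} (hij : i ≠ j) :
    ∃ φ : W →* DihedralGroup (M i j),
      φ (cs.simple i) = DihedralGroup.sr 0 ∧ φ (cs.simple j) = DihedralGroup.sr 1 := by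
  classical
  let φ : B → DihedralGroup (M i j) := fun k =>
    if k = i then DihedralGroup.sr 0 else if k = j then DihedralGroup.sr 1 else 1
  have commute_sr (n : ℕ) (hn : n = 2) :
      Commute (DihedralGroup.sr 0 : DihedralGroup n) (DihedralGroup.sr 1) := by
    subst hn
    rw [commute_iff_eq]
    decide
  have commute_φ (h : M i j = 2) : Commute (φ i) (φ j) := by
    simpa [φ, hij.symm] using commute_sr _ h
  have eq_or_eq {k : B} (hk : φ k ≠ 1) : k = i ∨ k = j := by
    by_contra! hne
    exact hk (by simp only [φ, if_neg hne.1, if_neg hne.2])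
  have hφ : M.IsLiftable φ := by
    refine hM.isLiftable (fun k => ?_) fun k l hkl => ?_
    · simp only [φ]
      split_ifs <;> simp
    · by_cases hk : φ k = 1
      · exact hk ▸ Commute.one_left _
      by_cases hl : φ l = 1
      · exact hl ▸ Commute.one_right _
      rcases eq_or_eq hk with rfl | rfl <;> rcases eq_or_eq hl with rfl | rfl
      · exact Commute.refl _
      · exact commute_φ hkl
      · exact (commute_φ (M.symmetric _ _ ▸ hkl)).symm
      · exact Commute.refl _
  exact ⟨cs.lift ⟨φ, hφ⟩, by simp [φ], by simp [φ, hij.symm]⟩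

theorem orderOf_simple_mul_simple (hM : IsRightAngled M) (i j : B) :
    orderOf (cs.simple i * cs.simple j) = M i j := by
  rcases eq_or_ne i j with rfl | hij
  · simp
  refine Nat.dvd_antisymm (orderOf_dvd_of_pow_eq_one (cs.simple_mul_simple_pow i j)) ?_
  obtain ⟨φ, hi, hj⟩ := exists_hom_dihedralGroup cs hM hij
  have order_image : orderOf (φ (cs.simple i * cs.simple j)) = M i j := by
    rw [map_mul, hi, hj, DihedralGroup.sr_mul_sr, sub_zero, DihedralGroup.orderOf_r_one]
  exact order_image ▸ orderOf_map_dvd φ _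

theorem IsRightAngled.eq_two_of_isOfFinOrder (hM : IsRightAngled M) {i j : B} (hij : i ≠ j)
    (h : IsOfFinOrder (cs.simple i * cs.simple j)) : M i j = 2 := by
  refine (hM i j hij).resolve_right ?_
  rw [← orderOf_simple_mul_simple cs hM]
  exact h.orderOf_pos.ne'

end RightAngled

section Parabolic

/-- The subgroup `W_T` of `W` generated by a set `T` of simple reflections. -/
abbrev standardParabolic (T : Set B) : Subgroup W :=
  Subgroup.closure (cs.simple '' T)

open scoped IsMulCommutative in
theorem finite_closure_of_commute_of_isOfFinOrder {G : Type*} [Group G] {S : Set G}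
    (hS : S.Finite) (hcomm : ∀ x ∈ S, ∀ y ∈ S, x * y = y * x)
    (hord : ∀ x ∈ S, IsOfFinOrder x) : Finite (Subgroup.closure S) := by
  have := Subgroup.isMulCommutative_closure hcomm
  have : Group.FG (Subgroup.closure S) :=
    (Group.fg_iff_subgroup_fg _).2 ((Subgroup.fg_iff _).2 ⟨S, rfl, hS⟩)
  refine CommGroup.finite_of_fg_isMulTorsion _ fun ⟨x, hx⟩ => Submonoid.isOfFinOrder_coe.1 ?_
  induction hx using Subgroup.closure_induction with
  | mem x hx => exact hord x hx
  | one => exact .one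
  | mul x y hx hy ihx ihy =>
    have hxy : Commute x y := congrArg Subtype.val
      (mul_comm (⟨x, hx⟩ : Subgroup.closure S) ⟨y, hy⟩)
    exact hxy.isOfFinOrder_mul ihx ihy
  | inv x _ ihx => exact ihx.inv

theorem isOfFinOrder_simple_mul_simple_of_finite {T : Set B} [Finite (standardParabolic cs T)]
    {i j : B} (hi : i ∈ T) (hj : j ∈ T) : IsOfFinOrder (cs.simple i * cs.simple j) :=
  have mem {k : B} (hk : k ∈ T) : cs.simple k ∈ standardParabolic cs T :=
    Subgroup.subset_closure (Set.mem_image_of_mem _ hk)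
  Submonoid.isOfFinOrder_coe.2
    (isOfFinOrder_of_finite (⟨_, mul_mem (mem hi) (mem hj)⟩ : standardParabolic cs T))

theorem finite_standardParabolic_of_pairwise {T : Set B} (hT : T.Finite)
    (hpair : T.Pairwise fun i j => M i j = 2) : Finite (standardParabolic cs T) := by
  refine finite_closure_of_commute_of_isOfFinOrder (hT.image _) ?_ ?_
  · rintro _ ⟨i, hi, rfl⟩ _ ⟨j, hj, rfl⟩
    rcases eq_or_ne i j with rfl | hij
    · rfl
    · exact commute_simple_of_pow_two_eq_one cs
        (hpair hi hj hij ▸ cs.simple_mul_simple_pow i j)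
  · rintro _ ⟨i, -, rfl⟩
    exact isOfFinOrder_iff_pow_eq_one.2 ⟨2, two_pos, cs.simple_sq i⟩

theorem IsRightAngled.finite_standardParabolic_iff (hM : IsRightAngled M) {T : Set B}
    (hT : T.Finite) :
    Finite (standardParabolic cs T) ↔ T.Pairwise fun i j => M i j = 2 :=
  ⟨fun _ _ hi _ hj hij => hM.eq_two_of_isOfFinOrder cs hij
      (isOfFinOrder_simple_mul_simple_of_finite cs hi hj),
    finite_standardParabolic_of_pairwise cs hT⟩

/-- The `k`-element sets `T` of generators whose parabolic subgroup `W_T` is finite, that is, the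
spherical subsets of cardinality `k`. -/
def sphericalSubsets (k : ℕ) : Set (Finset B) :=
  {T | T.card = k ∧ Finite (standardParabolic cs (T : Set B))}

theorem ncard_sphericalSubsets_zero : (sphericalSubsets cs 0).ncard = 1 := by
  have eq_singleton : sphericalSubsets cs 0 = {∅} := by
    ext T
    simp only [sphericalSubsets, Finset.card_eq_zero, Set.mem_ofPred_eq, Set.mem_singleton_iff,
      and_iff_left_iff_imp]
    rintro rfl
    exact finite_standardParabolic_of_pairwise cs (Finset.finite_toSet ∅) (by simp)
  rw [eq_singleton, Set.ncard_singleton]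

theorem ncard_sphericalSubsets_one : (sphericalSubsets cs 1).ncard = Nat.card B := by
  have eq_range : sphericalSubsets cs 1 = Set.range singleton := by
    ext T
    simp only [sphericalSubsets, Finset.card_eq_one, Set.mem_ofPred_eq, Set.mem_range]
    constructor
    · rintro ⟨⟨i, rfl⟩, -⟩
      exact ⟨i, rfl⟩
    · rintro ⟨i, rfl⟩
      exact ⟨⟨i, rfl⟩, finite_standardParabolic_of_pairwise cs (Finset.finite_toSet {i}) (by simp)⟩
  rw [eq_range, Set.ncard_range_of_injective Finset.singleton_injective]

theorem IsRightAngled.sphericalSubsets_eq (hM : IsRightAngled M) (k : ℕ) :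
    sphericalSubsets cs k = {T | T.card = k ∧ ∀ i ∈ T, ∀ j ∈ T, i ≠ j → M i j = 2} := by
  ext T
  exact and_congr_right fun _ => hM.finite_standardParabolic_iff cs T.finite_toSet

theorem card_le_of_finite_standardParabolic {d : ℕ}
    (hd : ∀ T : Finset B, T.card = d + 1 → Infinite (standardParabolic cs (T : Set B)))
    {T : Finset B} (hT : Finite (standardParabolic cs (T : Set B))) : T.card ≤ d := by
  by_contra! hlt
  obtain ⟨U, hUT, hU⟩ := Finset.exists_subset_card_eq (Nat.succ_le_of_lt hlt)
  have hle : standardParabolic cs (U : Set B) ≤ standardParabolic cs (T : Set B) :=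
    Subgroup.closure_mono (Set.image_mono (Finset.coe_subset.2 hUT))
  exact (hd U hU).not_finite (Finite.of_injective _ (Subgroup.inclusion_injective hle))

end Parabolic

section Growth

/-- The growth series of `(W, S)` with respect to word length. Its coefficients are meaningful only
for finite `S`, since `Set.ncard` of an infinite sphere is `0`. -/
noncomputable def growthSeries : ℤ⟦X⟧ :=
  PowerSeries.mk fun n => ({w : W | cs.length w = n}.ncard : ℤ)

/-- The elements of length `n` having every element of `T` as a right descent. -/
def descentSphere (T : Finset B) (n : ℕ) : Set W :=
  {w | cs.length w = n ∧ ∀ i ∈ T, cs.IsRightDescent w i}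

/-- The generating function by length of the elements having every element of `T` as a right
descent. When `W_T` is finite, these are the products `u * w_T` of a minimal representative `u` of a
coset of `W_T` and the longest element `w_T` of `W_T`. -/
noncomputable def descentSeries (T : Finset B) : ℤ⟦X⟧ :=
  PowerSeries.mk fun n => ((descentSphere cs T n).ncard : ℤ)

theorem descentSeries_empty : descentSeries cs ∅ = growthSeries cs := by
  simp [descentSeries, descentSphere, growthSeries]

theorem descentSeries_eq_zero {T : Finset B} {i j : B} (hi : i ∈ T) (hj : j ∈ T)
    (h : ¬ IsOfFinOrder (cs.simple i * cs.simple j)) : descentSeries cs T = 0 := by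
  have empty (n : ℕ) : descentSphere cs T n = ∅ :=
    Set.eq_empty_of_forall_notMem fun w hw =>
      h (isOfFinOrder_simple_mul_simple_of_isRightDescent cs (hw.2 i hi) (hw.2 j hj))
  ext n
  simp [descentSeries, empty]

theorem finite_setOf_length_eq [Finite B] (n : ℕ) : {w : W | cs.length w = n}.Finite := by
  refine ((List.finite_length_eq B n).image cs.wordProd).subset fun w hw => ?_
  obtain ⟨ω, hω, rfl⟩ := cs.exists_isReduced w
  exact ⟨ω, hω.symm.trans hw, rfl⟩

theorem descentSphere_insert [DecidableEq B] (T : Finset B) (s : B) (n : ℕ) :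
    descentSphere cs (insert s T) n = descentSphere cs T n ∩ {w | cs.IsRightDescent w s} := by
  ext w
  simp [descentSphere, and_assoc, and_comm (a := cs.IsRightDescent w s)]

theorem image_mul_simple_descentSphere_insert [DecidableEq B] {T : Finset B} {s : B}
    (hT : ∀ i ∈ T, orderOf (cs.simple i * cs.simple s) = 2) (n : ℕ) :
    (· * cs.simple s) '' descentSphere cs (insert s T) (n + 1) =
      descentSphere cs T n \ {w | cs.IsRightDescent w s} := by
  have descents_iff (w : W) : (∀ i ∈ T, cs.IsRightDescent (w * cs.simple s) i) ↔
      ∀ i ∈ T, cs.IsRightDescent w i :=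
    forall₂_congr fun i hi => isRightDescent_mul_simple_iff_of_orderOf_eq_two cs (hT i hi) w
  ext w
  rw [descentSphere_insert]
  constructor
  · rintro ⟨v, ⟨⟨hlen, hdesc⟩, hs⟩, rfl⟩
    have length_eq : cs.length (v * cs.simple s) + 1 = n + 1 :=
      (cs.isRightDescent_iff.1 hs).trans hlen
    exact ⟨⟨Nat.succ_injective length_eq, (descents_iff v).2 hdesc⟩,
      cs.isRightDescent_iff_not_isRightDescent_mul.1 hs⟩
  · rintro ⟨⟨hlen, hdesc⟩, hs⟩
    have length_eq : cs.length (w * cs.simple s) = n + 1 :=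
      (cs.not_isRightDescent_iff.1 hs).trans (congrArg Nat.succ hlen)
    refine ⟨w * cs.simple s, ⟨⟨length_eq, (descents_iff w).2 hdesc⟩, ?_⟩,
      cs.simple_mul_simple_cancel_right s⟩
    refine cs.isRightDescent_iff_not_isRightDescent_mul.2 ?_
    rwa [cs.simple_mul_simple_cancel_right]

theorem descentSeries_insert [Finite B] [DecidableEq B] {T : Finset B} {s : B}
    (hT : ∀ i ∈ T, orderOf (cs.simple i * cs.simple s) = 2) :
    (1 + X) * descentSeries cs (insert s T) = X * descentSeries cs T := by
  ext n
  rw [add_mul, one_mul, map_add]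
  rcases n with _ | n
  · have empty : descentSphere cs (insert s T) 0 = ∅ :=
      Set.eq_empty_of_forall_notMem fun w hw =>
        Nat.not_lt_zero _ ((hw.2 s (Finset.mem_insert_self s T)).trans_eq hw.1)
    simp [descentSeries, empty]
  · have ncard_succ : (descentSphere cs (insert s T) (n + 1)).ncard =
        (descentSphere cs T n \ {w | cs.IsRightDescent w s}).ncard := by
      rw [← image_mul_simple_descentSphere_insert cs hT,
        Set.ncard_image_of_injective _ (mul_left_injective _)]
    have finite_sphere : (descentSphere cs T n).Finite :=
      (finite_setOf_length_eq cs n).subset fun _ hw => hw.1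
    simp only [coeff_succ_X_mul, descentSeries, coeff_mk, ncard_succ]
    rw [descentSphere_insert, add_comm]
    exact_mod_cast Set.ncard_inter_add_ncard_sdiff_eq_ncard _ _ finite_sphere

theorem one_add_X_pow_card_mul_descentSeries [Finite B] {T : Finset B}
    (hT : (T : Set B).Pairwise fun i j => orderOf (cs.simple i * cs.simple j) = 2) :
    (1 + X) ^ T.card * descentSeries cs T = X ^ T.card * growthSeries cs := by
  classical
  induction T using Finset.induction_on with
  | empty => simp [descentSeries_empty]
  | insert s T hs ih =>
    have ih := ih (hT.mono (by simp))
    have insert_eq := descentSeries_insert cs (T := T) (s := s) fun i hi =>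
      hT (by simp [hi]) (by simp) (ne_of_mem_of_not_mem hi hs)
    calc (1 + X) ^ (insert s T).card * descentSeries cs (insert s T)
      _ = (1 + X) ^ T.card * ((1 + X) * descentSeries cs (insert s T)) := by
        rw [Finset.card_insert_of_notMem hs, pow_succ, mul_assoc]
      _ = X * ((1 + X) ^ T.card * descentSeries cs T) := by rw [insert_eq, mul_left_comm]
      _ = X ^ (insert s T).card * growthSeries cs := by
        rw [ih, Finset.card_insert_of_notMem hs, pow_succ', mul_assoc]

open Classical in
theorem sum_neg_one_pow_card_forall_isRightDescent [Fintype B] (w : W) :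
    ∑ T : Finset B with ∀ i ∈ T, cs.IsRightDescent w i, (-1 : ℤ) ^ T.card =
      if w = 1 then 1 else 0 := by
  set D : Finset B := {i | cs.IsRightDescent w i} with D_def
  have filter_eq : ({T : Finset B | ∀ i ∈ T, cs.IsRightDescent w i} : Finset (Finset B)) =
      D.powerset := by
    ext T
    simp [D_def, Finset.subset_iff]
  have D_eq_empty_iff : D = ∅ ↔ w = 1 := by
    refine ⟨fun hD => by_contra fun hw => ?_, ?_⟩
    · obtain ⟨i, hi⟩ := cs.exists_rightDescent_of_ne_one hw
      exact Finset.notMem_empty i (hD ▸ Finset.mem_filter.2 ⟨Finset.mem_univ i, hi⟩)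
    · rintro rfl
      exact Finset.filter_false_of_mem fun i _ => cs.not_isRightDescent_one i
  simp only [filter_eq, Finset.sum_powerset_neg_one_pow_card, D_eq_empty_iff]

theorem sum_neg_one_pow_card_mul_descentSeries [Fintype B] :
    ∑ T : Finset B, (-1) ^ T.card * descentSeries cs T = 1 := by
  classical
  ext n
  set sphere := (finite_setOf_length_eq cs n).toFinset with sphere_def
  have coeff_eq (T : Finset B) : coeff n ((-1) ^ T.card * descentSeries cs T) =
      ∑ w ∈ sphere, if ∀ i ∈ T, cs.IsRightDescent w i then (-1 : ℤ) ^ T.card else 0 := by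
    have descentSphere_eq : descentSphere cs T n =
        ({w ∈ sphere | ∀ i ∈ T, cs.IsRightDescent w i} : Finset W) := by
      ext w
      simp [descentSphere, sphere_def]
    rw [show (-1 : ℤ⟦X⟧) ^ T.card = C ((-1) ^ T.card) by simp, coeff_C_mul, descentSeries,
      coeff_mk, descentSphere_eq, Set.ncard_coe_finset, ← Finset.sum_filter, Finset.sum_const,
      nsmul_eq_mul, mul_comm]
  calc coeff n (∑ T : Finset B, (-1) ^ T.card * descentSeries cs T)
    _ = ∑ w ∈ sphere, ∑ T : Finset B with ∀ i ∈ T, cs.IsRightDescent w i, (-1) ^ T.card := by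
      rw [map_sum, Finset.sum_congr rfl fun T _ => coeff_eq T, Finset.sum_comm]
      simp only [Finset.sum_filter]
    _ = ∑ w ∈ sphere, if w = 1 then 1 else 0 :=
      Finset.sum_congr rfl fun w _ => sum_neg_one_pow_card_forall_isRightDescent cs w
    _ = coeff n 1 := by
      simp [sphere_def, coeff_one, eq_comm]

theorem IsRightAngled.one_add_X_pow_mul_descentSeries [Finite B] (hM : IsRightAngled M)
    {T : Finset B} (hT : Finite (standardParabolic cs (T : Set B))) {d : ℕ} (hd : T.card ≤ d) :
    (1 + X) ^ d * ((-1) ^ T.card * descentSeries cs T) =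
      growthSeries cs * ((-X) ^ T.card * (1 + X) ^ (d - T.card)) := by
  have pairwise : (T : Set B).Pairwise fun i j => orderOf (cs.simple i * cs.simple j) = 2 := by
    simpa only [orderOf_simple_mul_simple cs hM] using
      (hM.finite_standardParabolic_iff cs T.finite_toSet).1 hT
  have series_eq := one_add_X_pow_card_mul_descentSeries cs pairwise
  rw [← Nat.add_sub_of_le hd, pow_add, Nat.add_sub_cancel_left, neg_pow X]
  linear_combination ((-1) ^ T.card * (1 + X) ^ (d - T.card)) * series_eq

theorem IsRightAngled.descentSeries_eq_zero_of_not_finite (hM : IsRightAngled M) {T : Finset B}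
    (hT : ¬ Finite (standardParabolic cs (T : Set B))) : descentSeries cs T = 0 := by
  rw [hM.finite_standardParabolic_iff cs T.finite_toSet] at hT
  simp only [Set.Pairwise, not_forall] at hT
  obtain ⟨i, hi, j, hj, hij, hne⟩ := hT
  exact descentSeries_eq_zero cs hi hj (mt (hM.eq_two_of_isOfFinOrder cs hij) hne)

end Growth

end CoxeterGrowth

open CoxeterGrowth in
theorem right_angled_rank3_steinberg_formula_general
    {B : Type*} [Finite B] {W : Type*} [Group W] {M : CoxeterMatrix B} (cs : CoxeterSystem M W)
    (hM : IsRightAngled M) (d : ℕ)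
    (hd : ∀ T : Finset B, T.card = d + 1 → Infinite (standardParabolic cs (T : Set B))) :
    growthSeries cs * ∑ k ∈ Finset.range (d + 1),
        ((sphericalSubsets cs k).ncard : ℤ⟦X⟧) * ((-X) ^ k * (1 + X) ^ (d - k)) =
      (1 + X) ^ d := by
  classical
  have := Fintype.ofFinite B
  let spherical : Finset (Finset B) := {T | Finite (standardParabolic cs (T : Set B))}
  have card_le (T) (hT : T ∈ spherical) : T.card ≤ d :=
    card_le_of_finite_standardParabolic cs hd (Finset.mem_filter.1 hT).2
  have ncard_eq (k : ℕ) :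
      (sphericalSubsets cs k).ncard = (spherical.filter fun T => T.card = k).card := by
    rw [← Set.ncard_coe_finset]
    congr 1
    ext T
    simp [sphericalSubsets, spherical, and_comm]
  symm
  calc (1 + X) ^ d
    _ = ∑ T : Finset B, (1 + X) ^ d * ((-1) ^ T.card * descentSeries cs T) := by
      rw [← Finset.mul_sum, sum_neg_one_pow_card_mul_descentSeries, mul_one]
    _ = ∑ T ∈ spherical, (1 + X) ^ d * ((-1) ^ T.card * descentSeries cs T) := by
      refine (Finset.sum_subset (Finset.subset_univ _) fun T _ hT => ?_).symm
      rw [hM.descentSeries_eq_zero_of_not_finite cs (by simpa [spherical] using hT), mul_zero,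
        mul_zero]
    _ = ∑ T ∈ spherical, growthSeries cs * ((-X) ^ T.card * (1 + X) ^ (d - T.card)) :=
      Finset.sum_congr rfl fun T hT =>
        hM.one_add_X_pow_mul_descentSeries cs (Finset.mem_filter.1 hT).2 (card_le T hT)
    _ = _ := by
      rw [← Finset.mul_sum, ← Finset.sum_fiberwise_of_maps_to'
        (fun T hT => Finset.mem_range.2 (Nat.lt_succ_of_le (card_le T hT)))
        fun k => (-X) ^ k * (1 + X) ^ (d - k)]
      simp only [Finset.sum_const, nsmul_eq_mul, ncard_eq]

/-- Steinberg's formula for a right-angled Coxeter system `(W, S)` with `|S| = f`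
whose finite standard parabolic subgroups have rank at most `3`: if `e2` is the number of
commuting pairs of generators and `v222` the number of `3`-element subsets generating a finite
subgroup, then the growth series `f_S(t)` satisfies
`f_S(t) · ((1+t)³ − f·t·(1+t)² + e2·t²·(1+t) − v222·t³) = (1+t)³` in `ℤ⟦t⟧`. -/
theorem right_angled_rank3_steinberg_formula
    {B : Type*} [Fintype B] {W : Type*} [Group W]
    {M : CoxeterMatrix B} (cs : CoxeterSystem M W)
    (hra : ∀ i j : B, i ≠ j → M i j = 2 ∨ M i j = 0)
    (f e2 v222 : ℕ)
    (hf : Fintype.card B = f)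
    (he2 : Set.ncard {T : Finset B | T.card = 2 ∧
        ∀ i ∈ T, ∀ j ∈ T, i ≠ j → M i j = 2} = e2)
    (hv222 : Set.ncard {T : Finset B | T.card = 3 ∧
        Finite ↥(Subgroup.closure (cs.simple '' (T : Set B)))} = v222)
    (h4 : ∀ T : Finset B, T.card = 4 →
        Infinite ↥(Subgroup.closure (cs.simple '' (T : Set B)))) :
    (PowerSeries.mk fun k => (Set.ncard {w : W | cs.length w = k} : ℤ)) *
        ((1 + X) ^ 3 - (f : PowerSeries ℤ) * X * (1 + X) ^ 2
          + (e2 : PowerSeries ℤ) * X ^ 2 * (1 + X)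
          - (v222 : PowerSeries ℤ) * X ^ 3)
      = (1 + X) ^ 3 := by
  have card_zero := CoxeterGrowth.ncard_sphericalSubsets_zero cs
  have card_one : (CoxeterGrowth.sphericalSubsets cs 1).ncard = f := by
    rw [CoxeterGrowth.ncard_sphericalSubsets_one, Nat.card_eq_fintype_card, hf]
  have card_two : (CoxeterGrowth.sphericalSubsets cs 2).ncard = e2 := by
    rw [CoxeterGrowth.IsRightAngled.sphericalSubsets_eq cs hra, he2]
  have card_three : (CoxeterGrowth.sphericalSubsets cs 3).ncard = v222 := hv222
  have formula := right_angled_rank3_steinberg_formula_general cs hra 3 h4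
  simp only [Finset.sum_range_succ, Finset.sum_range_zero, card_zero, card_one, card_two,
    card_three] at formula
  refine Eq.trans (congrArg (CoxeterGrowth.growthSeries cs * ·) ?_) formula
  push_cast
  ring
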